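/- Let a > 0, h > 0, N > 0, λ > 0, and let μ be a probability measure on [0,∞). Define φ(P) = λ·P − a·∫₀^∞ ln(1 + P·h/(N + I)) dμ(I) for P ≥ 0. Then: (i) φ is convex on [0,∞); (ii) if a·∫₀^∞ h/(N + I) dμ(I) ≤ λ, then P = 0 is a global minimizer of φ on [0,∞); (iii) if a·∫₀^∞ h/(N + I) dμ(I) > λ, then there exists a unique P* > 0 with a·∫₀^∞ h/(N + I + P*·h) dμ(I) = λ, and this P* is the unique global minimizer of φ on [0,∞). -/

import Mathlib

open MeasureTheory

/-!
With the random gain `g = h / (N + I)`, the cost of power `P` is `λ P - a ∫ log (1 + P g)` and its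
derivative is `λ - a ∫ g / (1 + P g)`. Integrating `log x ≤ x - 1` at the ratio
`(1 + Q g) / (1 + P g)` shows that the cost lies above each of its tangent lines, and strictly above
away from the point of contact as soon as `g` is not almost surely zero. Convexity follows and, in
the strict case, a stationary point is the unique minimizer; in particular there is at most one.
A positive stationary point exists by the intermediate value theorem: the marginal rate
`∫ g / (1 + P g)` is continuous in `P`, equals `∫ g` at `0` and, by dominated convergence, tends to
`0` at infinity.
-/

open Filter Set Topology

theorem convexOn_of_add_le {𝕜 E : Type*} [Field 𝕜] [LinearOrder 𝕜] [IsStrictOrderedRing 𝕜]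
    [AddCommGroup E] [Module 𝕜 E] {s : Set E} {f : E → 𝕜} (f' : E → E →ₗ[𝕜] 𝕜)
    (hs : Convex 𝕜 s) (h : ∀ x ∈ s, ∀ y ∈ s, f x + f' x (y - x) ≤ f y) :
    ConvexOn 𝕜 s f := by
  refine ⟨hs, fun x hx y hy u v hu hv huv ↦ ?_⟩
  have hz : u • x + v • y ∈ s := hs hx hy hu hv huv
  set z := u • x + v • y
  have slopes_cancel : u * f' z (x - z) + v * f' z (y - z) = 0 := by
    have : u • (x - z) + v • (y - z) = 0 := by
      rw [smul_sub, smul_sub, sub_add_sub_comm, ← add_smul, huv, one_smul, sub_self]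
    simpa only [map_add, map_smul, smul_eq_mul, map_zero] using congrArg (f' z) this
  calc f z = u * (f z + f' z (x - z)) + v * (f z + f' z (y - z)) := by
        linear_combination -f z * huv - slopes_cancel
    _ ≤ u • f x + v • f y := by
        simp only [smul_eq_mul]
        gcongr
        exacts [h z hz x hx, h z hz y hy]

section Pointwise

variable {P Q x : ℝ}

theorem div_one_add_mul_le_self (hP : 0 ≤ P) (hx : 0 ≤ x) : x / (1 + P * x) ≤ x :=
  div_le_self hx (le_add_of_nonneg_right (mul_nonneg hP hx))

theorem one_add_mul_div_one_add_mul_sub_one (hP : 0 ≤ P) (hx : 0 ≤ x) :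
    (1 + Q * x) / (1 + P * x) - 1 = (Q - P) * (x / (1 + P * x)) := by
  have : 1 + P * x ≠ 0 := by positivity
  field_simp
  ring

theorem log_one_add_mul_le (hP : 0 ≤ P) (hQ : 0 ≤ Q) (hx : 0 ≤ x) :
    Real.log (1 + Q * x) ≤ Real.log (1 + P * x) + (Q - P) * (x / (1 + P * x)) := by
  have hPx : 0 < 1 + P * x := by positivity
  have hQx : 0 < 1 + Q * x := by positivity
  have := Real.log_le_sub_one_of_pos (div_pos hQx hPx)
  rw [Real.log_div hQx.ne' hPx.ne', one_add_mul_div_one_add_mul_sub_one hP hx] at this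
  linarith

theorem log_one_add_mul_lt (hP : 0 ≤ P) (hQ : 0 ≤ Q) (hQP : Q ≠ P) (hx : 0 < x) :
    Real.log (1 + Q * x) < Real.log (1 + P * x) + (Q - P) * (x / (1 + P * x)) := by
  have hPx : 0 < 1 + P * x := by positivity
  have hQx : 0 < 1 + Q * x := by positivity
  have ratio_ne_one : (1 + Q * x) / (1 + P * x) ≠ 1 := by
    simpa [div_eq_one_iff_eq hPx.ne', hx.ne'] using hQP
  have := Real.log_lt_sub_one_of_pos (div_pos hQx hPx) ratio_ne_one
  rw [Real.log_div hQx.ne' hPx.ne', one_add_mul_div_one_add_mul_sub_one hP hx.le] at this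
  linarith

theorem tendsto_div_one_add_mul_atTop (hx : 0 ≤ x) :
    Tendsto (fun P : ℝ ↦ x / (1 + P * x)) atTop (𝓝 0) := by
  rcases hx.eq_or_lt with rfl | hx
  · simp
  · exact (tendsto_atTop_add_const_left _ 1 (tendsto_id.atTop_mul_const hx)).const_div_atTop x

end Pointwise

section RandomGain

variable {Ω : Type*} [MeasurableSpace Ω]

/-- The expected logarithmic rate (in nats) achieved with transmit power `P` over a channel whose
random gain, relative to noise plus interference, is `g`. -/
noncomputable def expectedRate (μ : Measure Ω) (g : Ω → ℝ) (P : ℝ) : ℝ :=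
  ∫ ω, Real.log (1 + P * g ω) ∂μ

/-- The derivative of `expectedRate` in the power, as obtained by differentiating under the
integral sign. -/
noncomputable def marginalRate (μ : Measure Ω) (g : Ω → ℝ) (P : ℝ) : ℝ :=
  ∫ ω, g ω / (1 + P * g ω) ∂μ

/-- The transmit-power cost: power at the price `lam` per watt, minus the expected rate at the
reward `a`. -/
noncomputable def powerCost (a lam : ℝ) (μ : Measure Ω) (g : Ω → ℝ) (P : ℝ) : ℝ :=
  lam * P - a * expectedRate μ g P

variable {μ : Measure Ω} {g : Ω → ℝ} {a lam P Q : ℝ}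

theorem aestronglyMeasurable_div_one_add_mul (hg : AEStronglyMeasurable g μ) (P : ℝ) :
    AEStronglyMeasurable (fun ω ↦ g ω / (1 + P * g ω)) μ :=
  (hg.aemeasurable.div (by fun_prop)).aestronglyMeasurable

theorem ae_norm_div_one_add_mul_le (hg₀ : 0 ≤ᵐ[μ] g) (hP : 0 ≤ P) :
    ∀ᵐ ω ∂μ, ‖g ω / (1 + P * g ω)‖ ≤ g ω := by
  filter_upwards [hg₀] with ω (hω : 0 ≤ g ω)
  rw [Real.norm_of_nonneg (by positivity)]
  exact div_one_add_mul_le_self hP hω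

theorem integrable_div_one_add_mul (hg : Integrable g μ) (hg₀ : 0 ≤ᵐ[μ] g) (hP : 0 ≤ P) :
    Integrable (fun ω ↦ g ω / (1 + P * g ω)) μ :=
  hg.mono' (aestronglyMeasurable_div_one_add_mul hg.1 P) (ae_norm_div_one_add_mul_le hg₀ hP)

theorem integrable_log_one_add_mul (hg : Integrable g μ) (hg₀ : 0 ≤ᵐ[μ] g) (hP : 0 ≤ P) :
    Integrable (fun ω ↦ Real.log (1 + P * g ω)) μ := by
  refine (hg.const_mul P).mono' ?_ ?_
  · exact (Real.measurable_log.comp_aemeasurable (by fun_prop)).aestronglyMeasurable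
  · filter_upwards [hg₀] with ω (hω : 0 ≤ g ω)
    have hPg : 0 ≤ P * g ω := mul_nonneg hP hω
    rw [Real.norm_of_nonneg (Real.log_nonneg (by linarith))]
    linarith [Real.log_le_sub_one_of_pos (show 0 < 1 + P * g ω by linarith)]

theorem integrable_log_one_add_mul_add (hg : Integrable g μ) (hg₀ : 0 ≤ᵐ[μ] g) (hP : 0 ≤ P)
    (c : ℝ) : Integrable (fun ω ↦ Real.log (1 + P * g ω) + c * (g ω / (1 + P * g ω))) μ :=
  (integrable_log_one_add_mul hg hg₀ hP).add ((integrable_div_one_add_mul hg hg₀ hP).const_mul c)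

theorem expectedRate_add_mul_marginalRate (hg : Integrable g μ) (hg₀ : 0 ≤ᵐ[μ] g) (hP : 0 ≤ P)
    (c : ℝ) : expectedRate μ g P + c * marginalRate μ g P =
      ∫ ω, Real.log (1 + P * g ω) + c * (g ω / (1 + P * g ω)) ∂μ := by
  rw [integral_add (integrable_log_one_add_mul hg hg₀ hP)
    ((integrable_div_one_add_mul hg hg₀ hP).const_mul c), integral_const_mul]
  rfl

theorem expectedRate_le_add (hg : Integrable g μ) (hg₀ : 0 ≤ᵐ[μ] g) (hP : 0 ≤ P) (hQ : 0 ≤ Q) :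
    expectedRate μ g Q ≤ expectedRate μ g P + (Q - P) * marginalRate μ g P := by
  rw [expectedRate_add_mul_marginalRate hg hg₀ hP]
  exact integral_mono_ae (integrable_log_one_add_mul hg hg₀ hQ)
    (integrable_log_one_add_mul_add hg hg₀ hP _)
    (hg₀.mono fun ω hω ↦ log_one_add_mul_le hP hQ hω)

theorem expectedRate_lt_add (hg : Integrable g μ) (hg₀ : 0 ≤ᵐ[μ] g) (hg_pos : 0 < ∫ ω, g ω ∂μ)
    (hP : 0 ≤ P) (hQ : 0 ≤ Q) (hQP : Q ≠ P) :
    expectedRate μ g Q < expectedRate μ g P + (Q - P) * marginalRate μ g P := by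
  refine (expectedRate_le_add hg hg₀ hP hQ).lt_of_ne fun heq ↦ hg_pos.ne' ?_
  rw [expectedRate_add_mul_marginalRate hg hg₀ hP] at heq
  have integrands_eq := (integral_eq_iff_of_ae_le (integrable_log_one_add_mul hg hg₀ hQ)
    (integrable_log_one_add_mul_add hg hg₀ hP _)
    (hg₀.mono fun ω hω ↦ log_one_add_mul_le hP hQ hω)).1 heq
  refine integral_eq_zero_of_ae ?_
  filter_upwards [hg₀, integrands_eq] with ω hω hω_eq
  by_contra hne
  exact (log_one_add_mul_lt hP hQ hQP (lt_of_le_of_ne hω (Ne.symm hne))).ne hω_eq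

theorem marginalRate_zero : marginalRate μ g 0 = ∫ ω, g ω ∂μ := by
  simp [marginalRate]

theorem continuousOn_marginalRate (hg : Integrable g μ) (hg₀ : 0 ≤ᵐ[μ] g) :
    ContinuousOn (marginalRate μ g) (Ici 0) := by
  refine continuousOn_of_dominated (bound := g)
    (fun P _ ↦ aestronglyMeasurable_div_one_add_mul hg.1 P)
    (fun P hP ↦ ae_norm_div_one_add_mul_le hg₀ hP) hg ?_
  filter_upwards [hg₀] with ω (hω : 0 ≤ g ω)
  refine ContinuousOn.div (by fun_prop) (by fun_prop) fun P (hP : 0 ≤ P) ↦ ?_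
  positivity

theorem tendsto_marginalRate_atTop (hg : Integrable g μ) (hg₀ : 0 ≤ᵐ[μ] g) :
    Tendsto (marginalRate μ g) atTop (𝓝 0) := by
  rw [← integral_zero Ω ℝ (μ := μ)]
  exact tendsto_integral_filter_of_dominated_convergence g
    (.of_forall fun P ↦ aestronglyMeasurable_div_one_add_mul hg.1 P)
    ((eventually_ge_atTop 0).mono fun P hP ↦ ae_norm_div_one_add_mul_le hg₀ hP) hg
    (hg₀.mono fun ω hω ↦ tendsto_div_one_add_mul_atTop hω)

theorem exists_pos_marginalRate_eq (hg : Integrable g μ) (hg₀ : 0 ≤ᵐ[μ] g) {c : ℝ} (hc : 0 < c)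
    (hcg : c < ∫ ω, g ω ∂μ) : ∃ P, 0 < P ∧ marginalRate μ g P = c := by
  rw [← marginalRate_zero] at hcg
  obtain ⟨P, hP, rfl⟩ := isPreconnected_Ici.intermediate_value_Ioc self_mem_Ici
    (le_principal_iff.2 (Ici_mem_atTop 0)) (continuousOn_marginalRate hg hg₀)
    (tendsto_marginalRate_atTop hg hg₀) ⟨hc, hcg.le⟩
  refine ⟨P, lt_of_le_of_ne hP ?_, rfl⟩
  rintro rfl
  exact hcg.false

theorem powerCost_add_le (ha : 0 ≤ a) (hg : Integrable g μ) (hg₀ : 0 ≤ᵐ[μ] g) (hP : 0 ≤ P)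
    (hQ : 0 ≤ Q) :
    powerCost a lam μ g P + (lam - a * marginalRate μ g P) * (Q - P) ≤ powerCost a lam μ g Q := by
  have := mul_le_mul_of_nonneg_left (expectedRate_le_add hg hg₀ hP hQ) ha
  simp only [powerCost]
  linarith

theorem convexOn_powerCost (ha : 0 ≤ a) (hg : Integrable g μ) (hg₀ : 0 ≤ᵐ[μ] g) :
    ConvexOn ℝ (Ici 0) (powerCost a lam μ g) :=
  convexOn_of_add_le (fun P ↦ LinearMap.mul ℝ ℝ (lam - a * marginalRate μ g P)) (convex_Ici 0)
    fun _ hP _ hQ ↦ powerCost_add_le ha hg hg₀ hP hQ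

theorem powerCost_zero_le (ha : 0 ≤ a) (hg : Integrable g μ) (hg₀ : 0 ≤ᵐ[μ] g)
    (hlam : a * ∫ ω, g ω ∂μ ≤ lam) (hP : 0 ≤ P) :
    powerCost a lam μ g 0 ≤ powerCost a lam μ g P := by
  have tangent_at_zero := powerCost_add_le (lam := lam) ha hg hg₀ le_rfl hP
  rw [marginalRate_zero, sub_zero] at tangent_at_zero
  exact (le_add_of_nonneg_right (mul_nonneg (sub_nonneg.2 hlam) hP)).trans tangent_at_zero

theorem powerCost_lt_of_mul_marginalRate_eq (ha : 0 < a) (hg : Integrable g μ) (hg₀ : 0 ≤ᵐ[μ] g)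
    (hg_pos : 0 < ∫ ω, g ω ∂μ) (hP : 0 ≤ P) (hQ : 0 ≤ Q) (hQP : Q ≠ P)
    (hstat : a * marginalRate μ g P = lam) : powerCost a lam μ g P < powerCost a lam μ g Q := by
  have := mul_lt_mul_of_pos_left (expectedRate_lt_add hg hg₀ hg_pos hP hQ hQP) ha
  simp only [powerCost, ← hstat]
  linarith

theorem stmt_2_general (ha : 0 ≤ a) (hlam : 0 < lam) (hg : Integrable g μ) (hg₀ : 0 ≤ᵐ[μ] g) :
    ConvexOn ℝ (Ici 0) (powerCost a lam μ g) ∧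
    (a * ∫ ω, g ω ∂μ ≤ lam → ∀ P, 0 ≤ P → powerCost a lam μ g 0 ≤ powerCost a lam μ g P) ∧
    (lam < a * ∫ ω, g ω ∂μ →
      ∃ Ps, 0 < Ps ∧ a * marginalRate μ g Ps = lam ∧
        (∀ P, 0 < P → a * marginalRate μ g P = lam → P = Ps) ∧
        (∀ P, 0 ≤ P → powerCost a lam μ g Ps ≤ powerCost a lam μ g P) ∧
        (∀ P, 0 ≤ P → powerCost a lam μ g P = powerCost a lam μ g Ps → P = Ps)) := by
  refine ⟨convexOn_powerCost ha hg hg₀, fun hle P ↦ powerCost_zero_le ha hg hg₀ hle,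
    fun hlt ↦ ?_⟩
  have hg_pos : 0 < ∫ ω, g ω ∂μ := pos_of_mul_pos_right (hlam.trans hlt) ha
  have ha_pos : 0 < a := pos_of_mul_pos_left (hlam.trans hlt) hg_pos.le
  obtain ⟨Ps, hPs, hPs_eq⟩ :=
    exists_pos_marginalRate_eq hg hg₀ (div_pos hlam ha_pos) ((div_lt_iff₀' ha_pos).2 hlt)
  have hstat : a * marginalRate μ g Ps = lam := by rw [hPs_eq, mul_div_cancel₀ _ ha_pos.ne']
  have cost_lt {P Q : ℝ} := powerCost_lt_of_mul_marginalRate_eq (P := P) (Q := Q) (lam := lam)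
    ha_pos hg hg₀ hg_pos
  have cost_lt_of_ne {P : ℝ} (hP : 0 ≤ P) (hne : P ≠ Ps) := cost_lt hPs.le hP hne hstat
  refine ⟨Ps, hPs, hstat, fun P hP hP_stat ↦ ?_, fun P hP ↦ ?_, fun P hP heq ↦ ?_⟩
  · by_contra hne
    exact (cost_lt_of_ne hP.le hne).asymm (cost_lt hP.le hPs.le (Ne.symm hne) hP_stat)
  · rcases eq_or_ne P Ps with rfl | hne
    exacts [le_rfl, (cost_lt_of_ne hP hne).le]
  · by_contra hne
    exact (cost_lt_of_ne hP hne).ne' heq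

end RandomGain

section Interference

variable {μ : Measure ℝ} {h N : ℝ}

theorem ae_div_add_nonneg (hI : ∀ᵐ I ∂μ, 0 ≤ I) (hh : 0 ≤ h) (hN : 0 ≤ N) :
    0 ≤ᵐ[μ] fun I ↦ h / (N + I) :=
  hI.mono fun _ hI ↦ div_nonneg hh (add_nonneg hN hI)

theorem integrable_div_add [IsFiniteMeasure μ] (hI : ∀ᵐ I ∂μ, 0 ≤ I) (hh : 0 ≤ h) (hN : 0 < N) :
    Integrable (fun I ↦ h / (N + I)) μ := by
  refine .of_bound (C := h / N) (Measurable.aestronglyMeasurable (by fun_prop)) ?_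
  filter_upwards [hI] with I hI
  rw [Real.norm_of_nonneg (by positivity)]
  gcongr
  exact le_add_of_nonneg_right hI

theorem marginalRate_div_add (hI : ∀ᵐ I ∂μ, 0 ≤ I) (hN : 0 < N) (P : ℝ) :
    marginalRate μ (fun I ↦ h / (N + I)) P = ∫ I, h / (N + I + P * h) ∂μ := by
  refine integral_congr_ae (hI.mono fun I hI ↦ ?_)
  have : N + I ≠ 0 := by positivity
  have : (N + I) * (1 + P * (h / (N + I))) = N + I + P * h := by field_simp
  simp only [div_div, this]

end Interference

/-- Transmit-power component: `φ P = λ·P − a·∫ log(1 + P·h/(N + I)) dμ(I)`.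
(i) `φ` is convex on `[0,∞)`; (ii) if `a·∫ h/(N+I) dμ ≤ λ` then `P = 0` is a
global minimizer; (iii) if `a·∫ h/(N+I) dμ > λ` there is a unique `P* > 0`
solving `a·∫ h/(N+I+P*h) dμ = λ`, and it is the unique global minimizer. -/
theorem stmt_2
    (a h N lam : ℝ) (ha : 0 < a) (hh : 0 < h) (hN : 0 < N) (hlam : 0 < lam)
    (μ : Measure ℝ) [IsProbabilityMeasure μ] (hμ : μ (Set.Iio 0) = 0)
    (φ : ℝ → ℝ)
    (hφ : ∀ P : ℝ, φ P = lam * P - a * ∫ I, Real.log (1 + P * h / (N + I)) ∂μ) :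
    ConvexOn ℝ (Set.Ici 0) φ ∧
    ((a * ∫ I, h / (N + I) ∂μ ≤ lam) → ∀ P : ℝ, 0 ≤ P → φ 0 ≤ φ P) ∧
    ((lam < a * ∫ I, h / (N + I) ∂μ) →
      ∃ Ps : ℝ, 0 < Ps ∧ a * (∫ I, h / (N + I + Ps * h) ∂μ) = lam ∧
        (∀ P : ℝ, 0 < P → a * (∫ I, h / (N + I + P * h) ∂μ) = lam → P = Ps) ∧
        (∀ P : ℝ, 0 ≤ P → φ Ps ≤ φ P) ∧
        (∀ P : ℝ, 0 ≤ P → φ P = φ Ps → P = Ps)) := by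
  have hI : ∀ᵐ I ∂μ, 0 ≤ I := (measure_eq_zero_iff_ae_notMem.1 hμ).mono fun _ ↦ notMem_Iio.1
  obtain rfl : φ = powerCost a lam μ (fun I ↦ h / (N + I)) :=
    funext fun P ↦ by simp only [hφ, powerCost, expectedRate, mul_div_assoc]
  simpa only [marginalRate_div_add hI hN] using
    stmt_2_general ha.le hlam (integrable_div_add hI hh.le hN) (ae_div_add_nonneg hI hh.le hN.le)
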